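/- For 0 < β ≤ α < 1/2, the inequality (Φ⁻¹(β))² φ³(Φ⁻¹(α)) (2α-1)/(α²(1-α)²) + 2(1-2β) ln(β/(1-β)) Φ⁻¹(α) ≥ 0 holds, where Φ and φ are the standard normal CDF and PDF. -/

import Mathlib

open Real Set Filter Topology

noncomputable def phi (y : ℝ) : ℝ := (Real.sqrt (2 * Real.pi))⁻¹ * Real.exp (-y ^ 2 / 2)

noncomputable def Phi (x : ℝ) : ℝ := ∫ y in Set.Iic x, phi y

noncomputable def PhiInv (a : ℝ) : ℝ := Function.invFun Phi a

theorem phi_neg (x : ℝ) : phi (-x) = phi x := by simp [phi]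

theorem phi_pos (x : ℝ) : 0 < phi x := by unfold phi; positivity

theorem continuous_phi : Continuous phi := by unfold phi; fun_prop

theorem phi_eq (x : ℝ) : phi x = phi 0 * Real.exp (-(1 / 2 * x ^ 2)) := by
  have h : -x ^ 2 / 2 = -(1 / 2 * x ^ 2) := by ring
  simp [phi, h]

theorem phi_zero_sq : phi 0 ^ 2 = 1 / (2 * Real.pi) := by
  simp only [phi, ne_eq, OfNat.ofNat_ne_zero, not_false_eq_true, zero_pow, neg_zero, zero_div,
    Real.exp_zero, mul_one, inv_pow]
  rw [Real.sq_sqrt (by positivity), one_div]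

theorem integrable_phi : MeasureTheory.Integrable phi := by
  have h := (integrable_exp_neg_mul_sq (b := 1 / 2) (by norm_num)).const_mul
    (Real.sqrt (2 * Real.pi))⁻¹
  refine h.congr (Eventually.of_forall fun x => ?_)
  simp only [phi]
  ring_nf

theorem integral_phi_Ioi : ∫ y in Set.Ioi 0, phi y = 1 / 2 := by
  have h := integral_gaussian_Ioi (1 / 2)
  have h2 : ∀ y : ℝ, phi y = (Real.sqrt (2 * Real.pi))⁻¹ * Real.exp (-(1 / 2) * y ^ 2) := by
    intro y
    simp only [phi]
    ring_nf
  simp_rw [h2]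
  rw [MeasureTheory.integral_const_mul, h]
  have h3 : Real.pi / (1 / 2) = 2 * Real.pi := by ring
  have h4 : Real.sqrt (2 * Real.pi) ≠ 0 := by positivity
  rw [h3]
  field_simp

theorem Phi_zero : Phi 0 = 1 / 2 := by
  rw [← integral_phi_Ioi]
  have h := integral_comp_neg_Iic (0 : ℝ) phi
  simp only [phi_neg, neg_zero] at h
  exact h

/-- The standard normal mass of `[-x, x]`. -/
noncomputable def centralMass (x : ℝ) : ℝ := 2 * ∫ y in (0 : ℝ)..x, phi y

theorem Phi_eq (x : ℝ) : Phi x = (1 + centralMass x) / 2 := by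
  have h := intervalIntegral.integral_Iic_sub_Iic (a := 0) (b := x)
    integrable_phi.integrableOn integrable_phi.integrableOn
  have h0 := Phi_zero
  simp only [Phi] at h0 ⊢
  simp only [centralMass]
  linarith

theorem centralMass_neg (x : ℝ) : centralMass (-x) = -centralMass x := by
  have h := intervalIntegral.integral_comp_neg (a := 0) (b := x) phi
  simp only [phi_neg, neg_zero] at h
  simp only [centralMass]
  rw [h, intervalIntegral.integral_symm]
  ring

theorem centralMass_zero : centralMass 0 = 0 := by simp [centralMass]

theorem hasDerivAt_centralMass (x : ℝ) : HasDerivAt centralMass (2 * phi x) x :=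
  (continuous_phi.integral_hasStrictDerivAt 0 x).hasDerivAt.const_mul 2

theorem continuous_centralMass : Continuous centralMass :=
  continuous_iff_continuousAt.2 fun x => (hasDerivAt_centralMass x).continuousAt

theorem strictMono_centralMass : StrictMono centralMass :=
  strictMono_of_deriv_pos fun x => by
    rw [(hasDerivAt_centralMass x).deriv]
    have := phi_pos x
    positivity

theorem tendsto_centralMass : Tendsto centralMass atTop (𝓝 1) := by
  have h := MeasureTheory.intervalIntegral_tendsto_integral_Ioi (f := phi) (μ := MeasureTheory.volume)
    0 integrable_phi.integrableOn tendsto_id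
  rw [integral_phi_Ioi] at h
  have h2 := h.const_mul 2
  norm_num at h2
  exact h2

theorem exists_centralMass_eq {c : ℝ} (h0 : -1 < c) (h1 : c < 1) : ∃ x, centralMass x = c := by
  obtain ⟨a, ha⟩ := (tendsto_centralMass.eventually (lt_mem_nhds h1)).exists
  obtain ⟨b, hb⟩ := (tendsto_centralMass.eventually (lt_mem_nhds (neg_lt.1 h0))).exists
  refine mem_range_of_exists_le_of_exists_ge continuous_centralMass ⟨-b, ?_⟩ ⟨a, ha.le⟩
  rw [centralMass_neg]
  linarith

theorem Phi_PhiInv {a : ℝ} (h0 : 0 < a) (h1 : a < 1) : Phi (PhiInv a) = a := by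
  obtain ⟨x, hx⟩ := exists_centralMass_eq (c := 2 * a - 1) (by linarith) (by linarith)
  refine Function.invFun_eq ⟨x, ?_⟩
  rw [Phi_eq, hx]
  ring

theorem centralMass_neg_PhiInv {a : ℝ} (h0 : 0 < a) (h1 : a < 1) :
    centralMass (-PhiInv a) = 1 - 2 * a := by
  have h := Phi_PhiInv h0 h1
  rw [Phi_eq] at h
  rw [centralMass_neg]
  linarith

/-- Once the function becomes negative on the nonnegative half-line, it stays negative. -/
def NegPersists (f : ℝ → ℝ) : Prop := ∀ x y, 0 ≤ x → x ≤ y → f x < 0 → f y < 0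

theorem NegPersists.of_antitoneOn {f : ℝ → ℝ} (hf : AntitoneOn f (Set.Ici 0)) : NegPersists f :=
  fun _ _ hx hxy h => (hf hx (hx.trans hxy) hxy).trans_lt h

theorem NegPersists.pos_mul {f w : ℝ → ℝ} (hf : NegPersists f) (hw : ∀ x, 0 < w x) :
    NegPersists fun x => w x * f x :=
  fun x y hx hxy h => mul_neg_of_pos_of_neg (hw y)
    (hf x y hx hxy (by by_contra! h'; exact absurd h (not_lt.2 (mul_nonneg (hw x).le h'))))

theorem NegPersists.le_of_neg {f f' : ℝ → ℝ} (hd : ∀ x, HasDerivAt f (f' x) x) (h0 : f 0 = 0)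
    (hf' : NegPersists f') {x y : ℝ} (hx : 0 ≤ x) (hxy : x ≤ y) (h : f x < 0) : f y ≤ f x := by
  have hcont : Continuous f := continuous_iff_continuousAt.2 fun x => (hd x).continuousAt
  have hx' : 0 < x := lt_of_le_of_ne hx (by rintro rfl; linarith)
  obtain ⟨z, hz, hzf⟩ := exists_hasDerivAt_eq_slope f f' hx' hcont.continuousOn
    fun u _ => hd u
  have hz' : f' z < 0 := by
    rw [hzf, h0]
    exact div_neg_of_neg_of_pos (by linarith) (by linarith)
  have hanti : AntitoneOn f (Set.Ici z) := by
    refine antitoneOn_of_hasDerivWithinAt_nonpos (f' := f') (convex_Ici z) hcont.continuousOn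
      (fun u _ => (hd u).hasDerivWithinAt) fun u hu => ?_
    rw [interior_Ici] at hu
    exact (hf' z u hz.1.le (le_of_lt hu) hz').le
  exact hanti hz.2.le (hz.2.le.trans hxy) hxy

theorem NegPersists.of_hasDerivAt {f f' : ℝ → ℝ} (hd : ∀ x, HasDerivAt f (f' x) x)
    (h0 : f 0 = 0) (hf' : NegPersists f') : NegPersists f :=
  fun _ _ hx hxy h => (hf'.le_of_neg hd h0 hx hxy h).trans_lt h

theorem NegPersists.nonneg_of_tendsto {f f' : ℝ → ℝ} (hd : ∀ x, HasDerivAt f (f' x) x)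
    (h0 : f 0 = 0) (hf' : NegPersists f') (hlim : Tendsto f atTop (𝓝 0)) {x : ℝ} (hx : 0 ≤ x) :
    0 ≤ f x := by
  by_contra! h
  have := le_of_tendsto hlim
    ((eventually_ge_atTop x).mono fun y hy => hf'.le_of_neg hd h0 hx hy h)
  linarith

theorem hasDerivAt_exp_neg_mul_sq (c x : ℝ) :
    HasDerivAt (fun x : ℝ => Real.exp (-(c * x ^ 2))) (-(2 * c * x) * Real.exp (-(c * x ^ 2))) x := by
  have h := (((hasDerivAt_pow 2 x).const_mul c).neg).exp
  refine h.congr_deriv ?_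
  simp
  ring

theorem tendsto_exp_neg_mul_sq {c : ℝ} (hc : 0 < c) :
    Tendsto (fun x : ℝ => Real.exp (-(c * x ^ 2))) atTop (𝓝 0) :=
  Real.tendsto_exp_neg_atTop_nhds_zero.comp
    ((tendsto_pow_atTop two_ne_zero).const_mul_atTop hc)

theorem one_sub_exp_le_centralMass_sq {t : ℝ} (ht : 0 ≤ t) :
    1 - Real.exp (-(1 / 2 * t ^ 2)) ≤ centralMass t ^ 2 := by
  have hk : NegPersists fun x => 4 * phi 0 * centralMass x - x := by
    refine NegPersists.of_hasDerivAt (f' := fun x => 4 * phi 0 * (2 * phi x) - 1)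
      (fun x => ((hasDerivAt_centralMass x).const_mul _).sub (hasDerivAt_id x))
      (by simp [centralMass_zero]) (NegPersists.of_antitoneOn fun x hx y hy hxy => ?_)
    have hx' : (0 : ℝ) ≤ x := hx
    have h : phi y ≤ phi x := by
      rw [phi_eq x, phi_eq y]
      have := (phi_pos 0).le
      gcongr
    have := phi_pos 0
    gcongr
  have h := NegPersists.nonneg_of_tendsto
    (f := fun x => centralMass x ^ 2 + Real.exp (-(1 / 2 * x ^ 2)) - 1)
    (fun x => ?_) (by simp [centralMass_zero])
    (hk.pos_mul (w := fun x => Real.exp (-(1 / 2 * x ^ 2))) fun x => Real.exp_pos _) ?_ ht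
  · linarith
  · refine ((((hasDerivAt_centralMass x).pow 2).add
      (hasDerivAt_exp_neg_mul_sq (1 / 2) x)).sub_const 1).congr_deriv ?_
    rw [phi_eq x]
    simp
    ring
  · have := ((tendsto_centralMass.pow 2).add
      (tendsto_exp_neg_mul_sq (c := 1 / 2) (by norm_num))).sub_const 1
    simpa using this

theorem centralMass_sq_le_one_sub_exp {s : ℝ} (hs : 0 ≤ s) :
    centralMass s ^ 2 ≤ 1 - Real.exp (-(3 / 4 * s ^ 2)) := by
  have hpi : 8 * phi 0 ^ 2 ≤ 4 / 3 := by
    rw [phi_zero_sq, mul_one_div, div_le_div_iff₀ (by positivity) (by norm_num)]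
    linarith [Real.pi_gt_three]
  have hm : NegPersists fun x : ℝ =>
      3 / 2 - 3 / 4 * x ^ 2 - 8 * phi 0 ^ 2 * Real.exp (-(1 / 4 * x ^ 2)) := by
    refine NegPersists.of_antitoneOn ?_
    refine antitoneOn_of_hasDerivWithinAt_nonpos
      (f' := fun x => x * (8 * phi 0 ^ 2 / 2 * Real.exp (-(1 / 4 * x ^ 2)) - 3 / 2))
      (convex_Ici 0) (by fun_prop) (fun x _ => HasDerivAt.hasDerivWithinAt ?_) fun x hx => ?_
    · refine ((((hasDerivAt_pow 2 x).const_mul (3 / 4)).const_sub (3 / 2)).sub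
        ((hasDerivAt_exp_neg_mul_sq (1 / 4) x).const_mul (8 * phi 0 ^ 2))).congr_deriv ?_
      simp
      ring
    · rw [interior_Ici] at hx
      refine mul_nonpos_of_nonneg_of_nonpos (le_of_lt hx) ?_
      have h1 : Real.exp (-(1 / 4 * x ^ 2)) ≤ 1 := Real.exp_le_one_iff.2 (by nlinarith [sq_nonneg x])
      nlinarith [sq_nonneg (phi 0), Real.exp_pos (-(1 / 4 * x ^ 2))]
  have hk : NegPersists fun x =>
      3 / 2 * (x * Real.exp (-(1 / 4 * x ^ 2))) - 4 * phi 0 * centralMass x := by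
    refine NegPersists.of_hasDerivAt (fun x => ?_) (by simp [centralMass_zero])
      (hm.pos_mul (w := fun x => Real.exp (-(1 / 4 * x ^ 2))) fun x => Real.exp_pos _)
    refine ((((hasDerivAt_id x).mul (hasDerivAt_exp_neg_mul_sq (1 / 4) x)).const_mul (3 / 2)).sub
      ((hasDerivAt_centralMass x).const_mul (4 * phi 0))).congr_deriv ?_
    have he : Real.exp (-(1 / 2 * x ^ 2)) = Real.exp (-(1 / 4 * x ^ 2)) ^ 2 := by
      rw [← Real.exp_nat_mul]; congr 1; push_cast; ring
    rw [phi_eq x, he]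
    simp only [id]
    ring
  have h := NegPersists.nonneg_of_tendsto
    (f := fun x => 1 - Real.exp (-(3 / 4 * x ^ 2)) - centralMass x ^ 2)
    (fun x => ?_) (by simp [centralMass_zero])
    (hk.pos_mul (w := fun x => Real.exp (-(1 / 2 * x ^ 2))) fun x => Real.exp_pos _) ?_ hs
  · linarith
  · refine (((hasDerivAt_exp_neg_mul_sq (3 / 4) x).const_sub 1).sub
      ((hasDerivAt_centralMass x).pow 2)).congr_deriv ?_
    have he : Real.exp (-(3 / 4 * x ^ 2)) =
        Real.exp (-(1 / 2 * x ^ 2)) * Real.exp (-(1 / 4 * x ^ 2)) := by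
      rw [← Real.exp_add]; congr 1; ring
    rw [phi_eq x, he]
    simp
    ring
  · have := ((tendsto_exp_neg_mul_sq (c := 3 / 4) (by norm_num)).const_sub 1).sub
      (tendsto_centralMass.pow 2)
    simpa using this

theorem centralMass_le {s : ℝ} (hs : 0 ≤ s) : centralMass s ≤ 2 * phi 0 * s := by
  have h : AntitoneOn (fun x => centralMass x - 2 * phi 0 * x) (Set.Ici 0) := by
    refine antitoneOn_of_hasDerivWithinAt_nonpos (f' := fun x => 2 * phi x - 2 * phi 0 * 1)
      (convex_Ici 0) (continuous_centralMass.sub (by fun_prop)).continuousOn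
      (fun x _ => ((hasDerivAt_centralMass x).sub
        ((hasDerivAt_id x).const_mul (2 * phi 0))).hasDerivWithinAt) fun x _ => ?_
    have h1 : Real.exp (-(1 / 2 * x ^ 2)) ≤ 1 := Real.exp_le_one_iff.2 (by nlinarith [sq_nonneg x])
    rw [phi_eq x]
    nlinarith [phi_pos 0]
  have := h Set.self_mem_Ici hs hs
  simp only [centralMass_zero] at this
  linarith

theorem phi_cube_mul_centralMass_le {s : ℝ} (hs : 0 ≤ s) :
    phi s ^ 3 * centralMass s ≤ s * ((1 - centralMass s ^ 2) / 4) ^ 2 := by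
  have h1 := centralMass_le hs
  have h2 := centralMass_sq_le_one_sub_exp hs
  set e := Real.exp (-(3 / 4 * s ^ 2)) with he
  have he0 : 0 < e := Real.exp_pos _
  have h3 : phi s ^ 3 = phi 0 ^ 3 * e ^ 2 := by
    rw [phi_eq s, mul_pow, he, ← Real.exp_nat_mul, ← Real.exp_nat_mul]
    congr 2
    push_cast
    ring
  have hpi : phi 0 ^ 2 ≤ 1 / 6 := by
    rw [phi_zero_sq]
    apply one_div_le_one_div_of_le (by norm_num)
    linarith [Real.pi_gt_three]
  have hpi4 : 2 * phi 0 ^ 4 ≤ 1 / 16 := by nlinarith [sq_nonneg (phi 0)]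
  have hp := phi_pos 0
  calc phi s ^ 3 * centralMass s = phi 0 ^ 3 * e ^ 2 * centralMass s := by rw [h3]
    _ ≤ phi 0 ^ 3 * e ^ 2 * (2 * phi 0 * s) := by gcongr
    _ = s * (2 * phi 0 ^ 4 * e ^ 2) := by ring
    _ ≤ s * (1 / 16 * e ^ 2) := by gcongr
    _ = s * (e / 4) ^ 2 := by ring
    _ ≤ s * ((1 - centralMass s ^ 2) / 4) ^ 2 := by gcongr; linarith

theorem neg_log_one_sub_sq_le {q : ℝ} (h0 : -1 < q) (h1 : q < 1) :
    -Real.log (1 - q ^ 2) ≤ q * (Real.log (1 + q) - Real.log (1 - q)) := by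
  have key : ∀ x : ℝ, 0 < x → x - 1 ≤ x * Real.log x := fun x hx => by
    have h := Real.one_sub_inv_le_log_of_pos hx
    have := mul_le_mul_of_nonneg_left h hx.le
    rwa [mul_sub, mul_inv_cancel₀ hx.ne', mul_one] at this
  have e : (1 - q ^ 2) = (1 + q) * (1 - q) := by ring
  rw [e, Real.log_mul (by linarith) (by linarith)]
  linarith [key (1 + q) (by linarith), key (1 - q) (by linarith)]

theorem sq_le_two_mul_centralMass_mul_log {t : ℝ} (ht : 0 ≤ t) (h1 : centralMass t < 1) :
    t ^ 2 ≤ 2 * (centralMass t *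
      (Real.log (1 + centralMass t) - Real.log (1 - centralMass t))) := by
  have hq : 0 ≤ centralMass t := by
    rw [← centralMass_zero]
    exact strictMono_centralMass.monotone ht
  have h2 := neg_log_one_sub_sq_le (by linarith) h1
  have h3 : Real.log (1 - centralMass t ^ 2) ≤ -(1 / 2 * t ^ 2) := by
    rw [Real.log_le_iff_le_exp (by nlinarith)]
    linarith [one_sub_exp_le_centralMass_sq ht]
  linarith

theorem two_dim_inequality (α β : ℝ) (hβ : 0 < β) (hβα : β ≤ α) (hα : α < 1 / 2) :
    (PhiInv β) ^ 2 * (phi (PhiInv α)) ^ 3 * (2 * α - 1) / (α ^ 2 * (1 - α) ^ 2)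
      + 2 * (1 - 2 * β) * Real.log (β / (1 - β)) * PhiInv α ≥ 0 := by
  have hs := centralMass_neg_PhiInv (a := α) (by linarith) (by linarith)
  have ht := centralMass_neg_PhiInv (a := β) hβ (by linarith)
  obtain ⟨s, hsx⟩ : ∃ s, s = -PhiInv α := ⟨_, rfl⟩
  obtain ⟨t, htx⟩ : ∃ t, t = -PhiInv β := ⟨_, rfl⟩
  rw [← hsx] at hs
  rw [← htx] at ht
  have hs0 : 0 ≤ s := strictMono_centralMass.le_iff_le.1 (by rw [centralMass_zero]; linarith)
  have ht0 : 0 ≤ t := strictMono_centralMass.le_iff_le.1 (by rw [centralMass_zero]; linarith)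
  have hF := phi_cube_mul_centralMass_le hs0
  have hG := sq_le_two_mul_centralMass_mul_log ht0 (by linarith)
  rw [hs] at hF
  rw [ht, show 1 + (1 - 2 * β) = 2 * (1 - β) by ring, show 1 - (1 - 2 * β) = 2 * β by ring,
    Real.log_mul two_ne_zero (by linarith), Real.log_mul two_ne_zero hβ.ne'] at hG
  rw [Real.log_div hβ.ne' (by linarith), show PhiInv α = -s by linarith,
    show PhiInv β = -t by linarith, phi_neg]
  have hD : 0 < α ^ 2 * (1 - α) ^ 2 :=
    mul_pos (pow_pos (by linarith) 2) (pow_pos (by linarith) 2)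
  have hF' : phi s ^ 3 * (1 - 2 * α) / (α ^ 2 * (1 - α) ^ 2) ≤ s := by
    rw [div_le_iff₀ hD]
    refine hF.trans_eq ?_
    ring
  have h1 := mul_le_mul_of_nonneg_left hF' (sq_nonneg t)
  have h2 := mul_le_mul_of_nonneg_right hG hs0
  have h3 : (-t) ^ 2 * phi s ^ 3 * (2 * α - 1) / (α ^ 2 * (1 - α) ^ 2) =
      -(t ^ 2 * (phi s ^ 3 * (1 - 2 * α) / (α ^ 2 * (1 - α) ^ 2))) := by ring
  rw [h3]
  nlinarith
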